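/- There exists a constant C > 0, depending only on d and α, such that for every ε ∈ (0,1/20), with Θ = 2·arctan(ε), and every x ∈ Π_ε ∩ F: the fractional Laplacian Δ^{α/2}(h·(s*_ε - s_ε))(x) exists and |Δ^{α/2}(h·(s*_ε - s_ε))(x)| ≤ C·ε^α. -/

import Mathlib

open MeasureTheory Metric Real Set Filter RealInnerProductSpace
open scoped ENNReal

noncomputable section

/-- Euclidean space ℝ^d. -/
abbrev Ed (d : ℕ) := EuclideanSpace ℝ (Fin d)

/-- The constant `A_{d,α}`. -/
noncomputable def fracConst (d : ℕ) (α : ℝ) : ℝ :=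
  α * 2 ^ (α - 1) * π ^ (-(d : ℝ) / 2) * Real.Gamma (((d : ℝ) + α) / 2) / Real.Gamma (1 - α / 2)

/-- The fractional Laplacian `Δ^{α/2} Φ (x)` exists and equals `L`. -/
def fracLapAt (d : ℕ) (α : ℝ) (Φ : Ed d → ℝ) (x : Ed d) (L : ℝ) : Prop :=
  Filter.Tendsto
    (fun ε : ℝ => fracConst d α *
      ∫ y in {y : Ed d | ε < ‖y - x‖}, (Φ y - Φ x) * ‖y - x‖ ^ (-(d : ℝ) - α))
    (nhdsWithin 0 (Set.Ioi 0)) (nhds L)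

/-- The last coordinate of a vector in ℝ^d. -/
def lastCoord (d : ℕ) (x : Ed d) : ℝ :=
  if h : 0 < d then x ⟨d - 1, Nat.sub_lt h Nat.one_pos⟩ else 0

/-- The unit vector `e_d = (0,…,0,1)`. -/
def eLast (d : ℕ) : Ed d :=
  if h : 0 < d then EuclideanSpace.single ⟨d - 1, Nat.sub_lt h Nat.one_pos⟩ (1 : ℝ) else 0

/-- The right circular cone `Γ_Θ` of angle `Θ`. -/
def cone (d : ℕ) (Θ : ℝ) : Set (Ed d) := {x | ‖x‖ * Real.cos Θ < lastCoord d x}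

/-- The unit sphere `S^{d-1}` in ℝ^d. -/
def unitSphere (d : ℕ) : Set (Ed d) := Metric.sphere (0 : Ed d) 1

/-- The spherical cap `B_Θ`. -/
def capB (d : ℕ) (Θ : ℝ) : Set (Ed d) := {θ | θ ∈ unitSphere d ∧ Real.cos Θ < lastCoord d θ}

/-- The surface measure `σ`: the (d-1)-dimensional Hausdorff measure. -/
noncomputable def sphMeasure (d : ℕ) : Measure (Ed d) := μH[(d : ℝ) - 1]

/-- The kernel `u_λ(t)`. -/
noncomputable def uKernel (d : ℕ) (α lam t : ℝ) : ℝ :=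
  ∫ r in Set.Ioi (0 : ℝ), r ^ ((d : ℝ) + lam - 1) * (r ^ 2 - 2 * r * t + 1) ^ (-((d : ℝ) + α) / 2)

/-- The kernel `u_λ(t)` as a value in `[0,∞]`. -/
noncomputable def uKernelE (d : ℕ) (α lam t : ℝ) : ℝ≥0∞ :=
  ∫⁻ r in Set.Ioi (0 : ℝ),
    ENNReal.ofReal (r ^ ((d : ℝ) + lam - 1) * (r ^ 2 - 2 * r * t + 1) ^ (-((d : ℝ) + α) / 2))

/-- The spherical fractional Laplacian `Δ_S^{α/2} φ (η)` exists and equals `L`. -/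
def sphFracLapAt (d : ℕ) (α : ℝ) (φ : Ed d → ℝ) (η : Ed d) (L : ℝ) : Prop :=
  Filter.Tendsto
    (fun ε : ℝ => fracConst d α *
      ∫ θ in {θ : Ed d | θ ∈ unitSphere d ∧ ⟪θ, η⟫ ≤ Real.cos ε},
        (φ θ - φ η) * uKernel d α 0 ⟪θ, η⟫ ∂(sphMeasure d))
    (nhdsWithin 0 (Set.Ioi 0)) (nhds L)

/-- The integrand of the radial operator `R_λ`. -/
noncomputable def RopIntegrand (d : ℕ) (α lam : ℝ) (φ : Ed d → ℝ) (η θ : Ed d) : ℝ :=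
  φ θ * (uKernel d α lam ⟪θ, η⟫ - uKernel d α 0 ⟪θ, η⟫)

/-- The radial operator `R_λ φ (η)`. -/
noncomputable def Rop (d : ℕ) (α lam : ℝ) (φ : Ed d → ℝ) (η : Ed d) : ℝ :=
  fracConst d α * ∫ θ in unitSphere d, RopIntegrand d α lam φ η θ ∂(sphMeasure d)

/-- The modulus `ω`. -/
noncomputable def omegaFn (α Θ : ℝ) : ℝ :=
  if α < 1 then Θ ^ α else if α = 1 then Θ * |Real.log Θ| else Θ

/-- The Euler beta function. -/
noncomputable def eulerBeta (a b : ℝ) : ℝ := Real.Gamma a * Real.Gamma b / Real.Gamma (a + b)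

/-- The constant `B_{d,α}`. -/
noncomputable def Bconst (d : ℕ) (α : ℝ) : ℝ :=
  Real.Gamma (((d : ℝ) + α) / 2) / (π ^ ((3 : ℝ) / 2) * Real.Gamma (((d : ℝ) - 1 + α) / 2)) *
    Real.sin (π * α / 2) * eulerBeta (1 + α / 2) (((d : ℝ) - 1) / 2)

/-- The constant `C_{d-1,α}`. -/
noncomputable def Cexit (d : ℕ) (α : ℝ) : ℝ :=
  Real.Gamma (((d : ℝ) - 1) / 2) /
    (2 ^ α * Real.Gamma (((d : ℝ) - 1 + α) / 2) * Real.Gamma (1 + α / 2))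

/-- The constant `C̃_{d,α}`. -/
noncomputable def Ctilde (d : ℕ) (α : ℝ) : ℝ :=
  π ^ (((d : ℝ) - 1) / 2) / Real.Gamma (((d : ℝ) - 1) / 2) * Cexit d α *
    eulerBeta (1 + α / 2) (((d : ℝ) - 1) / 2)

/-- The norm `|ỹ|` of the first `d-1` coordinates of `y`. -/
noncomputable def tnorm (d : ℕ) (y : Ed d) : ℝ :=
  Real.sqrt (∑ i : Fin d, if (i : ℕ) < d - 1 then (y i) ^ 2 else 0)

/-- The function `s_ε`. -/
noncomputable def sExit (d : ℕ) (α ε : ℝ) (y : Ed d) : ℝ :=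
  Cexit d α * (max (ε ^ 2 - tnorm d y ^ 2) 0) ^ (α / 2)

/-- The cylinder `Π_ε`. -/
def cylPi (d : ℕ) (ε : ℝ) : Set (Ed d) := {y | tnorm d y < ε}

/-- The hyperplane `F = {y : y_d = 1}`. -/
def hyperF (d : ℕ) : Set (Ed d) := {y | lastCoord d y = 1}

/-- The Riesz kernel `h(y) = |y|^{α-d}`. -/
noncomputable def rieszH (d : ℕ) (α : ℝ) (y : Ed d) : ℝ := ‖y‖ ^ (α - (d : ℝ))

/-- The inversion `T x = x/|x|²`. -/
noncomputable def inversion (d : ℕ) (x : Ed d) : Ed d := (‖x‖ ^ 2)⁻¹ • x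

/-- The shifted cone `V_Θ = Γ_Θ + e_d/2`. -/
def Vcone (d : ℕ) (Θ : ℝ) : Set (Ed d) := {y | y - (1 / 2 : ℝ) • eLast d ∈ cone d Θ}

/-- The spindle `L_ε = T(V_Θ)` with `ε = tan(Θ/2)`, i.e. `Θ = 2 arctan ε`. -/
def Lspindle (d : ℕ) (ε : ℝ) : Set (Ed d) := inversion d '' Vcone d (2 * Real.arctan ε)

/-- The curvilinear projection `y* = T(e_d/2 + (Ty - e_d/2)/(2|Ty - e_d/2|))`. -/
noncomputable def ystar (d : ℕ) (y : Ed d) : Ed d :=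
  inversion d ((1 / 2 : ℝ) • eLast d +
    (2 * ‖inversion d y - (1 / 2 : ℝ) • eLast d‖)⁻¹ • (inversion d y - (1 / 2 : ℝ) • eLast d))

open scoped Classical in
/-- The function `s*_ε`. -/
noncomputable def sStar (d : ℕ) (α ε : ℝ) (y : Ed d) : ℝ :=
  if y ∈ Lspindle d ε then Cexit d α * (max (ε ^ 2 - tnorm d (ystar d y) ^ 2) 0) ^ (α / 2)
  else 0

open scoped Classical in
/-- The function `u = K(h s*_ε)`, i.e. `u(y) = s*_ε(Ty)`, `u(0) = 0`. -/
noncomputable def uFn (d : ℕ) (α ε : ℝ) (y : Ed d) : ℝ :=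
  if y = 0 then 0 else sStar d α ε (inversion d y)

/-- The spherical profile `φ_Θ`. -/
noncomputable def profileFn (d : ℕ) (α Θ : ℝ) (θ : Ed d) : ℝ :=
  2 ^ α * Cexit d α *
    (max (Real.tan (Θ / 2) ^ 2 - ‖eLast d - θ‖ ^ 2 / ‖eLast d + θ‖ ^ 2) 0) ^ (α / 2)

/-- Laplacian on ℝ^d as the sum of pure second partial derivatives. -/
noncomputable def lapE (d : ℕ) (u : Ed d → ℝ) (x : Ed d) : ℝ :=
  ∑ i : Fin d,
    iteratedFDeriv ℝ 2 u x ![EuclideanSpace.single i (1 : ℝ), EuclideanSpace.single i (1 : ℝ)]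

/-- Laplacian on ℝ^d × ℝ as the sum of the d+1 pure second partial derivatives. -/
noncomputable def lapProd (d : ℕ) (U : Ed d × ℝ → ℝ) (p : Ed d × ℝ) : ℝ :=
  (∑ i : Fin d, iteratedFDeriv ℝ 2 U p
      ![(EuclideanSpace.single i (1 : ℝ), (0 : ℝ)), (EuclideanSpace.single i (1 : ℝ), (0 : ℝ))]) +
    iteratedFDeriv ℝ 2 U p ![((0 : Ed d), (1 : ℝ)), ((0 : Ed d), (1 : ℝ))]

/-- The Poisson kernel `P_t(x)` for the upper half-space. -/
noncomputable def poissonK (d : ℕ) (t : ℝ) (x : Ed d) : ℝ :=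
  Real.Gamma (((d : ℝ) + 1) / 2) / π ^ (((d : ℝ) + 1) / 2) * t *
    (‖x‖ ^ 2 + t ^ 2) ^ (-((d : ℝ) + 1) / 2)

end

section Coordinates

variable {d : ℕ}

lemma norm_eLast (hd : 2 ≤ d) : ‖eLast d‖ = 1 := by
  have h : 0 < d := by omega
  simp [eLast, h]

lemma lastCoord_eq_inner (hd : 2 ≤ d) (y : Ed d) : lastCoord d y = ⟪y, eLast d⟫ := by
  have h : 0 < d := by omega
  simp [lastCoord, eLast, h, EuclideanSpace.inner_single_right]

lemma lastCoord_add (y z : Ed d) :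
    lastCoord d (y + z) = lastCoord d y + lastCoord d z := by
  unfold lastCoord
  split_ifs <;> simp

lemma lastCoord_sub (y z : Ed d) :
    lastCoord d (y - z) = lastCoord d y - lastCoord d z := by
  unfold lastCoord
  split_ifs <;> simp

lemma lastCoord_smul (c : ℝ) (y : Ed d) : lastCoord d (c • y) = c * lastCoord d y := by
  unfold lastCoord
  split_ifs <;> simp

lemma lastCoord_eLast (hd : 2 ≤ d) : lastCoord d (eLast d) = 1 := by
  rw [lastCoord_eq_inner hd, real_inner_self_eq_norm_sq, norm_eLast hd, one_pow]

lemma abs_lastCoord_le_norm (hd : 2 ≤ d) (y : Ed d) : |lastCoord d y| ≤ ‖y‖ := by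
  rw [lastCoord_eq_inner hd]
  simpa [norm_eLast hd] using abs_real_inner_le_norm y (eLast d)

lemma measurable_lastCoord : Measurable (lastCoord d) := by
  unfold lastCoord
  split_ifs <;> fun_prop

lemma tnorm_nonneg (y : Ed d) : 0 ≤ tnorm d y := Real.sqrt_nonneg _

lemma tnorm_sq_eq_sum (y : Ed d) :
    tnorm d y ^ 2 = ∑ i : Fin d, if (i : ℕ) < d - 1 then (y i) ^ 2 else 0 := by
  refine Real.sq_sqrt (Finset.sum_nonneg fun i _ => ?_)
  split_ifs <;> positivity

lemma tnorm_sq (hd : 2 ≤ d) (y : Ed d) :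
    tnorm d y ^ 2 = ‖y‖ ^ 2 - lastCoord d y ^ 2 := by
  have h : 0 < d := by omega
  have hlast : (∑ i : Fin d, if (i : ℕ) < d - 1 then 0 else (y i) ^ 2) = lastCoord d y ^ 2 := by
    rw [Finset.sum_eq_single (⟨d - 1, Nat.sub_lt h Nat.one_pos⟩ : Fin d)]
    · simp [lastCoord, h]
    · intro i _ hi
      have : (i : ℕ) ≠ d - 1 := fun hc => hi (Fin.ext hc)
      rw [if_pos (by omega)]
    · simp
  rw [eq_sub_iff_add_eq, ← hlast, tnorm_sq_eq_sum, ← Finset.sum_add_distrib,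
    EuclideanSpace.real_norm_sq_eq]
  refine Finset.sum_congr rfl fun i _ => ?_
  split_ifs <;> simp

lemma measurable_tnorm : Measurable (tnorm d) := by
  unfold tnorm
  refine Measurable.sqrt (Finset.measurable_sum _ fun i _ => ?_)
  split_ifs <;> fun_prop

lemma sq_apply_zero_le_tnorm_sq (hd : 2 ≤ d) (y : Ed d) :
    y ⟨0, by omega⟩ ^ 2 ≤ tnorm d y ^ 2 := by
  rw [tnorm_sq_eq_sum]
  have h := Finset.single_le_sum
    (f := fun i : Fin d => if (i : ℕ) < d - 1 then (y i) ^ 2 else 0)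
    (fun i _ => by dsimp only; split_ifs <;> positivity) (Finset.mem_univ ⟨0, by omega⟩)
  simpa [show 0 < d - 1 by omega] using h

lemma tnorm_sq_add_smul (hd : 2 ≤ d) (x z : Ed d) :
    ∃ b : ℝ, ∀ r : ℝ,
      tnorm d (x + r • z) ^ 2 = tnorm d x ^ 2 + 2 * b * r + tnorm d z ^ 2 * r ^ 2 := by
  refine ⟨⟪x, z⟫ - lastCoord d x * lastCoord d z, fun r => ?_⟩
  rw [tnorm_sq hd, tnorm_sq hd, tnorm_sq hd, norm_add_sq_real, lastCoord_add, lastCoord_smul,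
    inner_smul_right, norm_smul, mul_pow, Real.norm_eq_abs, sq_abs]
  ring

lemma tnorm_eq_norm_sub (hd : 2 ≤ d) (y : Ed d) :
    tnorm d y = ‖y - lastCoord d y • eLast d‖ := by
  rw [← sq_eq_sq₀ (tnorm_nonneg y) (norm_nonneg _), tnorm_sq hd, norm_sub_sq_real,
    inner_smul_right, ← lastCoord_eq_inner hd, norm_smul, norm_eLast hd, mul_one,
    Real.norm_eq_abs, sq_abs]
  ring

lemma tnorm_le_norm (hd : 2 ≤ d) (y : Ed d) : tnorm d y ≤ ‖y‖ := by
  rw [← sq_le_sq₀ (tnorm_nonneg y) (norm_nonneg y), tnorm_sq hd]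
  linarith [sq_nonneg (lastCoord d y)]

lemma tnorm_le_tnorm_add_norm_sub (hd : 2 ≤ d) (x y : Ed d) :
    tnorm d y ≤ tnorm d x + ‖y - x‖ := by
  refine le_trans ?_ (add_le_add_right (tnorm_le_norm hd (y - x)) (tnorm d x))
  rw [tnorm_eq_norm_sub hd y, tnorm_eq_norm_sub hd x, tnorm_eq_norm_sub hd (y - x),
    lastCoord_sub, sub_smul]
  refine le_of_eq_of_le (congrArg norm ?_) (norm_add_le _ _)
  abel

end Coordinates

section CurvilinearProjection

variable {d : ℕ}

lemma inversion_inversion (y : Ed d) : inversion d (inversion d y) = y := by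
  rcases eq_or_ne y 0 with rfl | hy
  · simp [inversion]
  · have : ‖y‖ ≠ 0 := norm_ne_zero_iff.2 hy
    simp only [inversion, norm_smul, smul_smul, norm_inv, norm_pow, norm_norm]
    convert one_smul ℝ y using 2
    field_simp

lemma measurable_inversion : Measurable (inversion d) := by
  unfold inversion
  fun_prop

lemma mem_Lspindle_iff {ε : ℝ} {y : Ed d} :
    y ∈ Lspindle d ε ↔ inversion d y ∈ Vcone d (2 * Real.arctan ε) := by
  constructor
  · rintro ⟨z, hz, rfl⟩
    rwa [inversion_inversion]
  · exact fun h => ⟨_, h, inversion_inversion y⟩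

lemma measurableSet_Lspindle {ε : ℝ} : MeasurableSet (Lspindle d ε) := by
  have h : Lspindle d ε = inversion d ⁻¹' Vcone d (2 * Real.arctan ε) := by
    ext y
    exact mem_Lspindle_iff
  rw [h]
  refine measurable_inversion ?_
  refine measurableSet_lt (f := fun y : Ed d => ‖y - (1 / 2 : ℝ) • eLast d‖ * _) ?_ ?_
  · fun_prop
  · exact measurable_lastCoord.comp (by fun_prop)

lemma cos_two_mul_arctan (ε : ℝ) :
    Real.cos (2 * Real.arctan ε) = (1 - ε ^ 2) / (1 + ε ^ 2) := by
  have : 1 + ε ^ 2 ≠ 0 := by positivity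
  rw [Real.cos_two_mul, Real.cos_sq_arctan]
  field_simp
  ring

/-- The squared distance of `y*` from the axis, and membership in the spindle, in terms of the
cosine of the opening angle of `Ty - e_d / 2`. -/
lemma tnorm_ystar_sq_and_mem_Lspindle_iff (hd : 2 ≤ d) {y : Ed d}
    (hP : 0 < 2 * lastCoord d y - ‖y‖ ^ 2) :
    ∃ R : ℝ, 0 < R ∧ R ^ 2 = (2 * lastCoord d y - ‖y‖ ^ 2) ^ 2 + 4 * tnorm d y ^ 2 ∧
      tnorm d (ystar d y) ^ 2 =
        (R - (2 * lastCoord d y - ‖y‖ ^ 2)) / (R + (2 * lastCoord d y - ‖y‖ ^ 2)) ∧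
      ∀ ε : ℝ, y ∈ Lspindle d ε ↔ tnorm d (ystar d y) ^ 2 < ε ^ 2 := by
  have hy : y ≠ 0 := by
    rintro rfl
    simp [lastCoord] at hP
  have hN : 0 < ‖y‖ ^ 2 := by positivity
  set N := ‖y‖ ^ 2 with hNdef
  set l := lastCoord d y with hl
  set p := inversion d y - (1 / 2 : ℝ) • eLast d with hp
  have hlp : lastCoord d p = (2 * l - N) / (2 * N) := by
    rw [hp, lastCoord_sub, lastCoord_smul, lastCoord_eLast hd, inversion, lastCoord_smul,
      ← hNdef, ← hl]
    field_simp
  have hip : ⟪inversion d y, eLast d⟫ = l / N := by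
    rw [← lastCoord_eq_inner hd, inversion, lastCoord_smul, ← hl, ← hNdef]
    field_simp
  have hnp : ‖p‖ ^ 2 = (4 - 4 * l + N) / (4 * N) := by
    rw [hp, norm_sub_sq_real, inner_smul_right, hip, norm_smul, norm_eLast hd, inversion,
      norm_smul, mul_pow, ← hNdef, Real.norm_eq_abs, sq_abs, Real.norm_eq_abs]
    norm_num
    field_simp
  have hp0 : 0 < ‖p‖ := by
    refine norm_pos_iff.2 fun h => ?_
    have : (0 : ℝ) < (2 * l - N) / (2 * N) := by positivity
    rw [← hlp, h] at this
    simp [lastCoord] at this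
  have hts : tnorm d y ^ 2 = N - l ^ 2 := tnorm_sq hd y
  have hR : (2 * N * ‖p‖) ^ 2 = (2 * l - N) ^ 2 + 4 * tnorm d y ^ 2 := by
    rw [mul_pow, hnp, hts]
    field_simp
    ring
  have hq : tnorm d (ystar d y) ^ 2 =
      (2 * N * ‖p‖ - (2 * l - N)) / (2 * N * ‖p‖ + (2 * l - N)) := by
    set w := (1 / 2 : ℝ) • eLast d + (2 * ‖p‖)⁻¹ • p with hw
    have hys : ystar d y = inversion d w := rfl
    have hlw : lastCoord d w = (2 * N * ‖p‖ + (2 * l - N)) / (4 * N * ‖p‖) := by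
      rw [hw, lastCoord_add, lastCoord_smul, lastCoord_smul, lastCoord_eLast hd, hlp]
      field_simp
      ring
    have hnw : ‖w‖ ^ 2 = (2 * N * ‖p‖ + (2 * l - N)) / (4 * N * ‖p‖) := by
      rw [hw, norm_add_sq_real, inner_smul_right, inner_smul_left, real_inner_comm,
        ← lastCoord_eq_inner hd, hlp, norm_smul, norm_smul, norm_eLast hd, mul_pow, mul_pow,
        Real.norm_eq_abs, sq_abs, Real.norm_eq_abs, sq_abs]
      simp only [conj_trivial]
      field_simp
      ring
    have hm : 0 < 2 * N * ‖p‖ + (2 * l - N) := by positivity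
    rw [hys, tnorm_sq hd, inversion, norm_smul, lastCoord_smul, mul_pow, mul_pow, hnw, hlw,
      Real.norm_eq_abs, sq_abs]
    field_simp
    ring
  refine ⟨2 * N * ‖p‖, by positivity, hR, hq, fun ε => ?_⟩
  rw [mem_Lspindle_iff, hq]
  change ‖p‖ * Real.cos (2 * Real.arctan ε) < lastCoord d p ↔ _
  rw [cos_two_mul_arctan, hlp, div_lt_iff₀ (by positivity), ← mul_div_assoc,
    div_lt_div_iff₀ (by positivity) (by positivity)]
  constructor <;> intro h <;> nlinarith

/-- Close to the hyperplane `y_d = 1` the curvilinear projection is a second-order perturbation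
of the orthogonal one. -/
lemma tnorm_ystar_sq_bounds (hd : 2 ≤ d) {y : Ed d} (ht : |lastCoord d y - 1| ≤ 1 / 4)
    (hρ : tnorm d y ≤ 1 / 2) :
    tnorm d y ^ 2 ≤ tnorm d (ystar d y) ^ 2 ∧
      tnorm d (ystar d y) ^ 2 - tnorm d y ^ 2 ≤
        3 * tnorm d y ^ 2 * (lastCoord d y - 1) ^ 2 ∧
      ∀ ε : ℝ, y ∈ Lspindle d ε ↔ tnorm d (ystar d y) ^ 2 < ε ^ 2 := by
  obtain ⟨t, hl⟩ : ∃ t, lastCoord d y = 1 + t := ⟨lastCoord d y - 1, by ring⟩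
  have hs := tnorm_sq hd y
  have h0 := tnorm_nonneg y
  set ρ := tnorm d y
  rw [hl, add_sub_cancel_left] at ht
  have ht2 : t ^ 2 ≤ 1 / 16 := by
    rw [← sq_abs]
    nlinarith [abs_nonneg t]
  have hρ2 : ρ ^ 2 ≤ 1 / 4 := by nlinarith
  have hPe : 2 * lastCoord d y - ‖y‖ ^ 2 = 1 - t ^ 2 - ρ ^ 2 := by
    rw [hs, hl]
    ring
  obtain ⟨R, hR0, hR, hq, hmem⟩ := tnorm_ystar_sq_and_mem_Lspindle_iff hd (y := y)
    (by rw [hPe]; linarith)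
  rw [hPe] at hR hq
  set P := 1 - t ^ 2 - ρ ^ 2 with hP
  have hRP : 0 < R + P := by linarith
  have hq' : tnorm d (ystar d y) ^ 2 = 4 * ρ ^ 2 / (R + P) ^ 2 := by
    rw [hq, div_eq_div_iff hRP.ne' (by positivity)]
    linear_combination (R + P) * hR
  have hupper : R + P ≤ 2 := by
    have : R ≤ 1 + t ^ 2 + ρ ^ 2 := by
      refine le_of_sq_le_sq ?_ (by positivity)
      rw [hR]
      nlinarith [sq_nonneg t]
    linarith
  have hlower : 2 - 2 * t ^ 2 ≤ R + P := by
    have : 1 + ρ ^ 2 - t ^ 2 ≤ R := by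
      refine le_of_sq_le_sq ?_ hR0.le
      rw [hR]
      nlinarith [mul_nonneg (sq_nonneg t) (sq_nonneg ρ)]
    linarith
  refine ⟨?_, ?_, hmem⟩
  · rw [hq', le_div_iff₀ (by positivity)]
    have : (R + P) ^ 2 ≤ 4 := by nlinarith
    nlinarith [sq_nonneg ρ]
  · rw [hl, add_sub_cancel_left, hq', sub_le_iff_le_add, div_le_iff₀ (by positivity)]
    have h1 : (2 - 2 * t ^ 2) ^ 2 ≤ (R + P) ^ 2 := by gcongr; linarith
    have h2 : 4 ≤ (3 * t ^ 2 + 1) * (2 - 2 * t ^ 2) ^ 2 := by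
      nlinarith [sq_nonneg t, mul_nonneg (sq_nonneg t) (sq_nonneg t),
        mul_nonneg (sq_nonneg t) (sub_nonneg.2 ht2)]
    have h3 : 4 ≤ (3 * t ^ 2 + 1) * (R + P) ^ 2 := h2.trans (by gcongr)
    nlinarith [mul_le_mul_of_nonneg_left h3 (sq_nonneg ρ)]

end CurvilinearProjection

section PolarIntegrals

/-- Integration in polar coordinates for nonnegative functions. -/
lemma lintegral_eq_lintegral_toSphere {E : Type*} [NormedAddCommGroup E] [NormedSpace ℝ E]
    [FiniteDimensional ℝ E] [Nontrivial E] [MeasurableSpace E] [BorelSpace E]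
    (μ : Measure E) [μ.IsAddHaarMeasure] {f : E → ℝ≥0∞} (hf : Measurable f) :
    ∫⁻ z, f z ∂μ = ∫⁻ ω : sphere (0 : E) 1, (∫⁻ r in Ioi (0 : ℝ),
      ENNReal.ofReal (r ^ (Module.finrank ℝ E - 1)) * f (r • (ω : E))) ∂μ.toSphere := by
  calc
    ∫⁻ z, f z ∂μ = ∫⁻ z : ({(0)}ᶜ : Set E), f z ∂(μ.comap (↑)) := by
      rw [lintegral_subtype_comap (measurableSet_singleton _).compl f,
        restrict_compl_singleton]
    _ = ∫⁻ q, f (q.2.1 • (q.1 : E))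
        ∂μ.toSphere.prod (.volumeIoiPow (Module.finrank ℝ E - 1)) := by
      rw [← μ.measurePreserving_homeomorphUnitSphereProd.lintegral_comp_emb
        (Homeomorph.measurableEmbedding _)]
      refine lintegral_congr fun z => ?_
      have hz : ‖(z : E)‖ ≠ 0 := norm_ne_zero_iff.2 z.2
      simp [smul_smul, hz]
    _ = _ := by
      rw [lintegral_prod _ (by fun_prop)]
      refine lintegral_congr fun ω => ?_
      rw [Measure.volumeIoiPow, lintegral_withDensity_eq_lintegral_mul _ (by fun_prop)
        (by fun_prop)]
      exact lintegral_subtype_comap measurableSet_Ioi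
        (fun r : ℝ => ENNReal.ofReal (r ^ (Module.finrank ℝ E - 1)) * f (r • (ω : E)))

/-- A scale-invariant bound for the incomplete beta integral. -/
lemma lintegral_rpow_mul_sub_rpow_le {η R : ℝ} (hη : 0 < η) (hη1 : η < 1) (hR : 0 < R) :
    ∫⁻ r in Ioo 0 R, ENNReal.ofReal (r ^ (η - 1) * (R - r) ^ (-η)) ≤
      ENNReal.ofReal (2 / η + 2 / (1 - η)) := by
  have hη1' : 0 < 1 - η := by linarith
  have hint1 : IntervalIntegrable (fun r : ℝ => 2 * R ^ (-η) * r ^ (η - 1)) volume 0 R :=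
    (intervalIntegral.intervalIntegrable_rpow' (by linarith)).const_mul _
  have hint2 : IntervalIntegrable (fun r : ℝ => 2 * R ^ (η - 1) * (R - r) ^ (-η)) volume 0 R := by
    have h := (intervalIntegral.intervalIntegrable_rpow' (a := 0) (b := R) (r := -η)
      (by linarith)).comp_sub_left R
    rw [sub_zero, sub_self] at h
    exact h.symm.const_mul _
  have hhalf : ∀ s : ℝ, -1 ≤ s → s ≤ 0 → (R / 2) ^ s ≤ 2 * R ^ s := by
    intro s hs hs0
    rw [Real.div_rpow hR.le (by norm_num), div_le_iff₀ (by positivity)]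
    have : (1 : ℝ) ≤ 2 * 2 ^ s := by
      have h2 : (2 : ℝ) ^ (-1 : ℝ) ≤ 2 ^ s := Real.rpow_le_rpow_of_exponent_le (by norm_num) hs
      rw [Real.rpow_neg_one] at h2
      linarith
    nlinarith [Real.rpow_pos_of_pos hR s]
  have hpt : ∀ r ∈ Ioo 0 R, r ^ (η - 1) * (R - r) ^ (-η) ≤
      2 * R ^ (-η) * r ^ (η - 1) + 2 * R ^ (η - 1) * (R - r) ^ (-η) := by
    rintro r ⟨h0, h1⟩
    have hr1 : 0 < r ^ (η - 1) := Real.rpow_pos_of_pos h0 _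
    have hr2 : 0 < (R - r) ^ (-η) := Real.rpow_pos_of_pos (by linarith) _
    have hR1 : 0 < R ^ (η - 1) := Real.rpow_pos_of_pos hR _
    have hR2 : 0 < R ^ (-η) := Real.rpow_pos_of_pos hR _
    rcases le_total r (R / 2) with h | h
    · have h3 : (R - r) ^ (-η) ≤ (R / 2) ^ (-η) :=
        Real.rpow_le_rpow_of_nonpos (by linarith) (by linarith) (by linarith)
      have h4 := h3.trans (hhalf (-η) (by linarith) (by linarith))
      nlinarith [mul_le_mul_of_nonneg_left h4 hr1.le, mul_pos hR1 hr2]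
    · have h3 : r ^ (η - 1) ≤ (R / 2) ^ (η - 1) :=
        Real.rpow_le_rpow_of_nonpos (by linarith) (by linarith) (by linarith)
      have h4 := h3.trans (hhalf (η - 1) (by linarith) (by linarith))
      nlinarith [mul_le_mul_of_nonneg_right h4 hr2.le, mul_pos hR2 hr1]
  calc
    _ ≤ ∫⁻ r in Ioo 0 R, ENNReal.ofReal
          (2 * R ^ (-η) * r ^ (η - 1) + 2 * R ^ (η - 1) * (R - r) ^ (-η)) := by
      refine setLIntegral_mono_ae (by fun_prop) (.of_forall fun r hr => ?_)
      exact ENNReal.ofReal_le_ofReal (hpt r hr)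
    _ = ENNReal.ofReal (∫ r in (0)..R,
          (2 * R ^ (-η) * r ^ (η - 1) + 2 * R ^ (η - 1) * (R - r) ^ (-η))) := by
      rw [restrict_Ioo_eq_restrict_Ioc, intervalIntegral.integral_of_le hR.le,
        ofReal_integral_eq_lintegral_ofReal (hint1.add hint2).1]
      filter_upwards [ae_restrict_mem measurableSet_Ioc] with r hr
      have : 0 ≤ R - r := by linarith [hr.2]
      have := hr.1
      dsimp only [Pi.zero_apply]
      positivity
    _ = _ := by
      congr 1
      rw [intervalIntegral.integral_add hint1 hint2, intervalIntegral.integral_const_mul,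
        intervalIntegral.integral_const_mul,
        intervalIntegral.integral_comp_sub_left (fun r => r ^ (-η)) R,
        integral_rpow (.inl (by linarith)), integral_rpow (.inl (by linarith)),
        sub_self, sub_zero, Real.zero_rpow (by linarith), Real.zero_rpow (by linarith)]
      have e1 : R ^ (-η) * R ^ (η - 1 + 1) = 1 := by
        rw [← Real.rpow_add hR, show -η + (η - 1 + 1) = 0 by ring, Real.rpow_zero]
      have e2 : R ^ (η - 1) * R ^ (-η + 1) = 1 := by
        rw [← Real.rpow_add hR, show η - 1 + (-η + 1) = 0 by ring, Real.rpow_zero]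
      rw [show η - 1 + 1 = η by ring] at *
      rw [show -η + 1 = 1 - η by ring] at *
      field_simp
      linear_combination (1 - η) * e1 + η * e2

/-- A concave quadratic that is positive at the origin dominates, on its positivity set in
`(0, ∞)`, a quadratic vanishing at the origin and at its positive root. -/
lemma exists_root_of_concave_quadratic {A b k : ℝ} (hA : 0 < A) (hk : 0 < k) :
    ∃ R : ℝ, 0 < R ∧ ∀ r : ℝ, 0 < r → 0 < A - 2 * b * r - k * r ^ 2 →
      r < R ∧ k * (r * (R - r)) ≤ A - 2 * b * r - k * r ^ 2 := by
  set D := √(b ^ 2 + k * A) with hD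
  have hD2 : D ^ 2 = b ^ 2 + k * A := Real.sq_sqrt (by positivity)
  have hDb : 0 < D - b := by
    have : |b| < D := Real.lt_sqrt_of_sq_lt (by rw [sq_abs]; nlinarith)
    linarith [le_abs_self b]
  obtain ⟨R, hR⟩ : ∃ R, k * R = D - b := ⟨(D - b) / k, by field_simp⟩
  have hR0 : 0 < R := pos_of_mul_pos_right (hR ▸ hDb) hk.le
  have hroot : A = 2 * b * R + k * R ^ 2 := by
    have : k * A = k * (2 * b * R + k * R ^ 2) := by
      linear_combination -hD2 - (k * R + b + D) * hR
    exact mul_left_cancel₀ hk.ne' this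
  have hfac : 0 < 2 * b + k * R := by
    have : 0 < R * (2 * b + k * R) := by nlinarith
    exact pos_of_mul_pos_right this hR0.le
  refine ⟨R, hR0, fun r hr hpos => ?_⟩
  have hlt : r < R := by
    by_contra! h
    nlinarith [mul_nonneg (sub_nonneg.2 h) (by positivity : 0 ≤ 2 * b + k * R + k * r)]
  refine ⟨hlt, ?_⟩
  nlinarith [mul_nonneg (sub_nonneg.2 hlt.le) hfac.le]

end PolarIntegrals

section SingularIntegrals

variable {d : ℕ}

lemma integrableOn_norm_rpow_ball {E : Type*} [NormedAddCommGroup E] [NormedSpace ℝ E]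
    [FiniteDimensional ℝ E] [Nontrivial E] [MeasurableSpace E] [BorelSpace E]
    (μ : Measure E) [μ.IsAddHaarMeasure] {s : ℝ} (hs : -(Module.finrank ℝ E : ℝ) < s) (r : ℝ) :
    IntegrableOn (fun z : E => ‖z‖ ^ s) (ball 0 r) μ := by
  rw [integrableOn_fun_norm_addHaar (μ := μ) (f := fun t : ℝ => t ^ s)]
  have hdim : 1 ≤ Module.finrank ℝ E := Module.finrank_pos
  have h : IntegrableOn (fun t : ℝ => t ^ ((Module.finrank ℝ E : ℝ) - 1 + s)) (Ioo 0 r) := by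
    rcases le_total r 0 with hr | hr
    · simp [Ioo_eq_empty_of_le hr]
    · exact ((intervalIntegral.intervalIntegrable_rpow' (a := 0) (b := r)
        (by linarith)).1).mono_set Ioo_subset_Ioc_self
  refine h.congr_fun (fun t ht => ?_) measurableSet_Ioo
  dsimp only [smul_eq_mul]
  rw [Real.rpow_add ht.1, ← Real.rpow_natCast, Nat.cast_sub hdim, Nat.cast_one]

lemma lintegral_toSphere_abs_rpow_lt_top (i : Fin d) {s : ℝ} (hs : 0 < s) (hs1 : s < 1) :
    ∫⁻ ω : sphere (0 : Ed d) 1, ENNReal.ofReal (|(ω : Ed d) i| ^ (-s))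
      ∂(volume : Measure (Ed d)).toSphere < ⊤ := by
  have : Nonempty (Fin d) := ⟨i⟩
  set f : Ed d → ℝ≥0∞ :=
    (ball 0 2).indicator fun z => ENNReal.ofReal ((|z i| / 2) ^ (-s)) with hf
  have hfm : Measurable f := Measurable.indicator (by fun_prop) measurableSet_ball
  have hle : ∫⁻ ω : sphere (0 : Ed d) 1, ENNReal.ofReal (|(ω : Ed d) i| ^ (-s))
      ∂(volume : Measure (Ed d)).toSphere ≤ ∫⁻ z, f z := by
    rw [lintegral_eq_lintegral_toSphere volume hfm]
    refine lintegral_mono fun ω => ?_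
    have hω : ‖(ω : Ed d)‖ = 1 := by simp
    calc
      ENNReal.ofReal (|(ω : Ed d) i| ^ (-s))
          = ∫⁻ _ in Ioo (1 : ℝ) 2, ENNReal.ofReal (|(ω : Ed d) i| ^ (-s)) := by
        rw [setLIntegral_const, Real.volume_Ioo]
        norm_num
      _ ≤ ∫⁻ r in Ioo (1 : ℝ) 2, ENNReal.ofReal (r ^ (Module.finrank ℝ (Ed d) - 1)) *
            f (r • (ω : Ed d)) := by
        refine setLIntegral_mono (by fun_prop) fun r hr => ?_
        have hr0 : 0 < r := by linarith [hr.1]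
        have hmem : r • (ω : Ed d) ∈ ball (0 : Ed d) 2 := by
          rw [mem_ball_zero_iff, norm_smul, hω, mul_one, Real.norm_eq_abs, abs_of_pos hr0]
          exact hr.2
        rw [hf, indicator_of_mem hmem]
        refine le_mul_of_one_le_of_le ?_ (ENNReal.ofReal_le_ofReal ?_)
        · rw [ENNReal.one_le_ofReal]
          exact one_le_pow₀ hr.1.le
        · rcases eq_or_ne ((ω : Ed d) i) 0 with h0 | h0
          · simp [h0]
          · rw [PiLp.smul_apply, smul_eq_mul, abs_mul, abs_of_pos hr0]
            have : 0 < |(ω : Ed d) i| := abs_pos.2 h0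
            refine Real.rpow_le_rpow_of_nonpos (by positivity) ?_ (by linarith)
            nlinarith [hr.2]
      _ ≤ _ := lintegral_mono_set fun r hr => lt_trans one_pos hr.1
  refine hle.trans_lt ?_
  set g : Fin d → ℝ → ℝ := fun j => (ball (0 : ℝ) 2).indicator
    (if j = i then fun t => (|t| / 2) ^ (-s) else fun _ => 1) with hg
  have hgi : ∀ j, Integrable (g j) := by
    intro j
    rw [hg]
    refine (integrable_indicator_iff measurableSet_ball).2 ?_
    split_ifs
    · have h := (integrableOn_norm_rpow_ball (volume : Measure ℝ) (s := -s)
        (by simpa using hs1) 2).div_const (2 ^ (-s))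
      refine IntegrableOn.congr_fun h (fun t _ => ?_) measurableSet_ball
      rw [Real.norm_eq_abs, Real.div_rpow (abs_nonneg t) zero_le_two]
    · exact integrableOn_const measure_ball_lt_top.ne
  have hint : Integrable (fun z : Ed d => ∏ j, g j (z j)) :=
    (PiLp.volume_preserving_ofLp (Fin d)).integrable_comp_of_integrable
      (g := fun z : Fin d → ℝ => ∏ j, g j (z j)) (Integrable.fintype_prod hgi)
  refine lt_of_le_of_lt (lintegral_mono fun z => ?_) hint.lintegral_lt_top
  refine indicator_apply_le' (fun hz => ENNReal.ofReal_le_ofReal ?_) (fun _ => zero_le)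
  have hz' : ∀ j, z j ∈ ball (0 : ℝ) 2 := fun j => by
    rw [mem_ball_zero_iff] at hz ⊢
    exact (PiLp.norm_apply_le z j).trans_lt hz
  refine le_of_eq ?_
  rw [Finset.prod_eq_single i]
  · simp only [hg, if_true]
    rw [indicator_of_mem (hz' i)]
  · intro j _ hj
    simp only [hg, if_neg hj]
    rw [indicator_of_mem (hz' j)]
  · simp

lemma volume_coordinate_eq_zero (i : Fin d) : volume {z : Ed d | z i = 0} = 0 := by
  have h := Measure.addHaar_submodule (volume : Measure (Ed d))
    (LinearMap.ker (EuclideanSpace.proj i : Ed d →L[ℝ] ℝ).toLinearMap) ?_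
  · convert h using 2
    ext z
    simp
  · intro htop
    have : EuclideanSpace.single i (1 : ℝ) ∈
        LinearMap.ker (EuclideanSpace.proj i : Ed d →L[ℝ] ℝ).toLinearMap :=
      htop ▸ Submodule.mem_top
    simp at this

/-- The blow-up of a negative power of the distance to the boundary of a cylinder is
integrable against a weakly singular kernel, uniformly in the pole of the kernel and in the radius
of the cylinder. -/
lemma exists_lintegral_cylinder_le (hd : 2 ≤ d) {η : ℝ} (hη : 0 < η) (hη1 : 2 * η < 1) :
    ∃ K : ℝ≥0∞, K ≠ ⊤ ∧ ∀ ε : ℝ, ∀ x : Ed d, tnorm d x < ε →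
      ∫⁻ y in cylPi d ε, ENNReal.ofReal
        ((ε ^ 2 - tnorm d y ^ 2) ^ (-η) * ‖y - x‖ ^ (2 * η - d)) ≤ K := by
  set i : Fin d := ⟨0, by omega⟩ with hi
  have : Nonempty (Fin d) := ⟨i⟩
  set c := ENNReal.ofReal (2 / η + 2 / (1 - η)) with hc
  refine ⟨∫⁻ ω : sphere (0 : Ed d) 1, c * ENNReal.ofReal (|(ω : Ed d) i| ^ (-(2 * η)))
      ∂(volume : Measure (Ed d)).toSphere, ?_, fun ε x hx => ?_⟩
  · rw [lintegral_const_mul _ (by fun_prop)]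
    exact ENNReal.mul_ne_top ENNReal.ofReal_ne_top
      (lintegral_toSphere_abs_rpow_lt_top i (by linarith) hη1).ne
  have hε : 0 < ε := (tnorm_nonneg x).trans_lt hx
  have hmeas := measurable_tnorm (d := d)
  have hcyl : MeasurableSet (cylPi d ε) := measurableSet_lt hmeas measurable_const
  set G : Ed d → ℝ≥0∞ := (cylPi d ε).indicator fun y =>
    ENNReal.ofReal ((ε ^ 2 - tnorm d y ^ 2) ^ (-η) * ‖y - x‖ ^ (2 * η - d)) with hG
  have hGm : Measurable G := Measurable.indicator (by fun_prop) hcyl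
  set H : Ed d → ℝ≥0∞ := {z | z i ≠ 0}.indicator fun z => G (x + z) with hH
  have hset : MeasurableSet {z : Ed d | z i ≠ 0} :=
    (measurableSet_eq_fun (by fun_prop) measurable_const).compl
  have hHm : Measurable H := Measurable.indicator (by fun_prop) hset
  have hGH : ∫⁻ y in cylPi d ε, ENNReal.ofReal
        ((ε ^ 2 - tnorm d y ^ 2) ^ (-η) * ‖y - x‖ ^ (2 * η - d)) = ∫⁻ z, H z := by
    rw [← lintegral_indicator hcyl, ← hG, ← lintegral_add_left_eq_self G x]
    refine lintegral_congr_ae ?_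
    have : ∀ᵐ z : Ed d, z i ≠ 0 := by
      rw [ae_iff]
      simpa using volume_coordinate_eq_zero i
    filter_upwards [this] with z hz
    exact (indicator_of_mem (s := {z : Ed d | z i ≠ 0}) hz fun z => G (x + z)).symm
  rw [hGH, lintegral_eq_lintegral_toSphere volume hHm]
  refine lintegral_mono fun ω => ?_
  have hω : ‖(ω : Ed d)‖ = 1 := by simp
  rcases eq_or_ne ((ω : Ed d) i) 0 with h0 | h0
  · have : ∀ r : ℝ, H (r • (ω : Ed d)) = 0 := fun r => by simp [hH, h0]
    simp [this]
  set k := tnorm d (ω : Ed d) ^ 2 with hk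
  have hki : (ω : Ed d) i ^ 2 ≤ k := sq_apply_zero_le_tnorm_sq hd _
  have hi2 : 0 < (ω : Ed d) i ^ 2 := by positivity
  have hk0 : 0 < k := hi2.trans_le hki
  obtain ⟨b, hb⟩ := tnorm_sq_add_smul hd x (ω : Ed d)
  obtain ⟨R, hR, hroot⟩ := exists_root_of_concave_quadratic (A := ε ^ 2 - tnorm d x ^ 2) (b := b)
    (by nlinarith [tnorm_nonneg x]) hk0
  calc
    _ ≤ ∫⁻ r in Ioi (0 : ℝ), (Ioo 0 R).indicator (fun r =>
          ENNReal.ofReal (|(ω : Ed d) i| ^ (-(2 * η))) *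
          ENNReal.ofReal (r ^ (η - 1) * (R - r) ^ (-η))) r := by
      refine setLIntegral_mono (Measurable.indicator (by fun_prop) measurableSet_Ioo)
        fun r hr => ?_
      replace hr : 0 < r := hr
      rcases lt_or_ge (tnorm d (x + r • (ω : Ed d))) ε with hin | hout
      · have hHr : H (r • (ω : Ed d)) ≤ ENNReal.ofReal
            ((ε ^ 2 - tnorm d (x + r • (ω : Ed d)) ^ 2) ^ (-η) * r ^ (2 * η - d)) := by
          refine (indicator_le_self _ _ _).trans ?_
          rw [hG, indicator_of_mem (show x + r • (ω : Ed d) ∈ cylPi d ε from hin),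
            add_sub_cancel_left, norm_smul, hω, mul_one, Real.norm_eq_abs, abs_of_pos hr]
        have hval : ε ^ 2 - tnorm d (x + r • (ω : Ed d)) ^ 2 =
            ε ^ 2 - tnorm d x ^ 2 - 2 * b * r - k * r ^ 2 := by
          rw [hb]
          ring
        have hpos : 0 < ε ^ 2 - tnorm d (x + r • (ω : Ed d)) ^ 2 := by
          nlinarith [tnorm_nonneg (x + r • (ω : Ed d))]
        obtain ⟨hrR, hge⟩ := hroot r hr (hval ▸ hpos)
        rw [← hval] at hge
        have hRr : 0 < R - r := by linarith
        rw [indicator_of_mem (show r ∈ Ioo 0 R from ⟨hr, hrR⟩),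
          ← ENNReal.ofReal_mul (by positivity)]
        refine (mul_le_mul_right hHr _).trans ?_
        rw [← ENNReal.ofReal_mul (by positivity), finrank_euclideanSpace, Fintype.card_fin]
        refine ENNReal.ofReal_le_ofReal ?_
        have h1 : (ε ^ 2 - tnorm d (x + r • (ω : Ed d)) ^ 2) ^ (-η) ≤
            |(ω : Ed d) i| ^ (-(2 * η)) * (r ^ (-η) * (R - r) ^ (-η)) := by
          calc
            _ ≤ ((ω : Ed d) i ^ 2 * (r * (R - r))) ^ (-η) := by
              refine Real.rpow_le_rpow_of_nonpos (by positivity) (le_trans ?_ hge) (by linarith)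
              gcongr
            _ = _ := by
              rw [Real.mul_rpow (by positivity) (by positivity),
                Real.mul_rpow hr.le hRr.le, ← sq_abs, ← Real.rpow_natCast,
                ← Real.rpow_mul (abs_nonneg _)]
              push_cast
              ring_nf
        have h2 : r ^ (d - 1) * r ^ (2 * η - d) * r ^ (-η) = r ^ (η - 1) := by
          rw [← Real.rpow_natCast, Nat.cast_sub (by omega), ← Real.rpow_add hr,
            ← Real.rpow_add hr]
          push_cast
          ring_nf
        calc
          _ = (r ^ (d - 1) * r ^ (2 * η - d)) *
              (ε ^ 2 - tnorm d (x + r • (ω : Ed d)) ^ 2) ^ (-η) := by ring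
          _ ≤ (r ^ (d - 1) * r ^ (2 * η - d)) *
              (|(ω : Ed d) i| ^ (-(2 * η)) * (r ^ (-η) * (R - r) ^ (-η))) := by gcongr
          _ = _ := by
            rw [← h2]
            ring
      · have : H (r • (ω : Ed d)) = 0 := by
          refine le_antisymm ((indicator_le_self _ _ _).trans ?_) (zero_le)
          rw [hG, indicator_of_notMem (show x + r • (ω : Ed d) ∉ cylPi d ε from not_lt.2 hout)]
        simp [this]
    _ ≤ ∫⁻ r in Ioo (0 : ℝ) R, ENNReal.ofReal (|(ω : Ed d) i| ^ (-(2 * η))) *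
          ENNReal.ofReal (r ^ (η - 1) * (R - r) ^ (-η)) := by
      rw [← lintegral_indicator measurableSet_Ioo]
      exact setLIntegral_le_lintegral _ _
    _ ≤ _ := by
      rw [lintegral_const_mul _ (by fun_prop), mul_comm]
      gcongr
      exact lintegral_rpow_mul_sub_rpow_le hη (by linarith) hR

/-- Away from the pole, the product of the Riesz kernel and the kernel of the fractional
Laplacian has a uniformly bounded integral. -/
lemma exists_lintegral_far_le (hd : 2 ≤ d) {α : ℝ} (hα : 0 < α) (hα2 : α < 2) :
    ∃ K : ℝ≥0∞, K ≠ ⊤ ∧ ∀ x : Ed d,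
      ∫⁻ y in {y : Ed d | 1 / 4 ≤ ‖y - x‖}, ENNReal.ofReal
        (rieszH d α y * ‖y - x‖ ^ (-(d : ℝ) - α)) ≤ K := by
  have : Nonempty (Fin d) := ⟨⟨0, by omega⟩⟩
  have hd' : (2 : ℝ) ≤ d := by exact_mod_cast hd
  have hloc := integrableOn_norm_rpow_ball (volume : Measure (Ed d)) (s := α - d)
    (by rw [finrank_euclideanSpace, Fintype.card_fin]; linarith) 1
  have hglob : Integrable fun z : Ed d => (1 + ‖z‖) ^ (-((d : ℝ) + α)) :=
    integrable_one_add_norm (by rw [finrank_euclideanSpace, Fintype.card_fin]; linarith)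
  set c₁ : ℝ := (1 / 4) ^ (-(d : ℝ) - α)
  set c₂ : ℝ := 5 ^ ((d : ℝ) + α)
  have hsplit : ∀ x y : Ed d, 1 / 4 ≤ ‖y - x‖ →
      ENNReal.ofReal (rieszH d α y * ‖y - x‖ ^ (-(d : ℝ) - α)) ≤
        ENNReal.ofReal c₁ * (ball 0 1).indicator (fun z => ENNReal.ofReal (‖z‖ ^ (α - d))) y +
          ENNReal.ofReal c₂ * ENNReal.ofReal ((1 + ‖y - x‖) ^ (-((d : ℝ) + α))) := by
    intro x y hxy
    have hxy0 : 0 < ‖y - x‖ := by linarith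
    rcases lt_or_ge ‖y‖ 1 with hy | hy
    · refine le_add_right ?_
      rw [indicator_of_mem (mem_ball_zero_iff.2 hy), ← ENNReal.ofReal_mul (by positivity), mul_comm,
        rieszH]
      refine ENNReal.ofReal_le_ofReal ?_
      gcongr
      exact Real.rpow_le_rpow_of_nonpos (by norm_num) hxy (by linarith)
    · refine le_add_left ?_
      rw [← ENNReal.ofReal_mul (by positivity)]
      refine ENNReal.ofReal_le_ofReal ?_
      have h1 : rieszH d α y ≤ 1 := Real.rpow_le_one_of_one_le_of_nonpos hy (by linarith)
      calc
        _ ≤ 1 * ‖y - x‖ ^ (-(d : ℝ) - α) := by gcongr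
        _ = 5 ^ ((d : ℝ) + α) * (5 * ‖y - x‖) ^ (-((d : ℝ) + α)) := by
          rw [Real.mul_rpow (by norm_num) hxy0.le, ← mul_assoc, ← Real.rpow_add (by norm_num),
            add_neg_cancel, Real.rpow_zero]
          ring_nf
        _ ≤ _ := by
          refine mul_le_mul_of_nonneg_left ?_ (by positivity)
          exact Real.rpow_le_rpow_of_nonpos (by positivity) (by linarith) (by linarith)
  refine ⟨ENNReal.ofReal c₁ * (∫⁻ z in ball (0 : Ed d) 1, ENNReal.ofReal (‖z‖ ^ (α - d))) +
      ENNReal.ofReal c₂ * ∫⁻ z : Ed d, ENNReal.ofReal ((1 + ‖z‖) ^ (-((d : ℝ) + α))),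
    ENNReal.add_ne_top.2 ⟨ENNReal.mul_ne_top ENNReal.ofReal_ne_top hloc.lintegral_lt_top.ne,
      ENNReal.mul_ne_top ENNReal.ofReal_ne_top hglob.lintegral_lt_top.ne⟩, fun x => ?_⟩
  have hset : MeasurableSet {y : Ed d | 1 / 4 ≤ ‖y - x‖} :=
    measurableSet_le measurable_const (by fun_prop)
  refine (setLIntegral_mono' hset fun y hy => hsplit x y hy).trans ?_
  refine (setLIntegral_le_lintegral _ _).trans ?_
  have hm : Measurable ((ball (0 : Ed d) 1).indicator
      fun z => ENNReal.ofReal (‖z‖ ^ (α - d))) :=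
    Measurable.indicator (by fun_prop) measurableSet_ball
  rw [lintegral_add_left (hm.const_mul _), lintegral_const_mul _ hm,
    lintegral_const_mul _ (by fun_prop), lintegral_indicator measurableSet_ball,
    lintegral_sub_right_eq_self (fun z : Ed d => ENNReal.ofReal ((1 + ‖z‖) ^ (-((d : ℝ) + α)))) x]

end SingularIntegrals

section DifferenceOfExitTimes

variable {d : ℕ}

/-- For an absolutely integrable difference quotient the principal value is the integral. -/
lemma fracLapAt_of_integrable {α : ℝ} {Φ : Ed d → ℝ} {x : Ed d}
    (h : Integrable fun y => (Φ y - Φ x) * ‖y - x‖ ^ (-(d : ℝ) - α)) :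
    fracLapAt d α Φ x (fracConst d α * ∫ y, (Φ y - Φ x) * ‖y - x‖ ^ (-(d : ℝ) - α)) := by
  have hset : ∀ δ : ℝ, MeasurableSet {y : Ed d | δ < ‖y - x‖} := fun δ =>
    measurableSet_lt measurable_const (by fun_prop)
  refine Tendsto.const_mul _ ?_
  simp_rw [← integral_indicator (hset _)]
  refine tendsto_integral_filter_of_dominated_convergence _
    (.of_forall fun δ => h.aestronglyMeasurable.indicator (hset δ))
    (.of_forall fun δ => .of_forall fun y => norm_indicator_le_norm_self _ _) h.norm
    (.of_forall fun y => ?_)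
  rcases eq_or_ne y x with rfl | hyx
  · refine tendsto_const_nhds.congr fun δ => ?_
    by_cases hδ : y ∈ {z : Ed d | δ < ‖z - y‖} <;> simp [indicator]
  · have hpos : 0 < ‖y - x‖ := norm_pos_iff.2 (sub_ne_zero.2 hyx)
    refine tendsto_const_nhds.congr' ?_
    filter_upwards [nhdsWithin_le_nhds (Iio_mem_nhds hpos)] with δ hδ
    rw [indicator_of_mem (show y ∈ {y : Ed d | δ < ‖y - x‖} from hδ)]

lemma rpow_sub_rpow_le_mul_sub_rpow {a b β θ : ℝ} (ha : 0 < a) (hb : 0 ≤ b) (hab : b ≤ a)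
    (hβ1 : β ≤ 1) (hθ1 : θ ≤ 1) :
    a ^ β - b ^ β ≤ a ^ (β - θ) * (a - b) ^ θ := by
  obtain ⟨u, rfl⟩ : ∃ u, b = a * u := ⟨b / a, by field_simp⟩
  have hu : 0 ≤ u := nonneg_of_mul_nonneg_right hb ha
  have hu1 : u ≤ 1 := by nlinarith
  have haβ : 0 < a ^ β := Real.rpow_pos_of_pos ha _
  have h1 : 1 - u ^ β ≤ (1 - u) ^ θ := by
    have h2 : u ≤ u ^ β := by
      rcases hu.eq_or_lt with rfl | hu0
      · exact Real.rpow_nonneg le_rfl _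
      · simpa using Real.rpow_le_rpow_of_exponent_ge hu0 hu1 hβ1
    have h3 : 1 - u ≤ (1 - u) ^ θ := by
      rcases (sub_nonneg.2 hu1).eq_or_lt with h | h
      · rw [← h]
        exact Real.rpow_nonneg le_rfl _
      · simpa using Real.rpow_le_rpow_of_exponent_ge h (by linarith) hθ1
    linarith
  rw [Real.mul_rpow ha.le hu, show a - a * u = a * (1 - u) by ring,
    Real.mul_rpow ha.le (by linarith), ← mul_assoc, ← Real.rpow_add ha, sub_add_cancel]
  nlinarith

lemma Cexit_pos (hd : 2 ≤ d) {α : ℝ} (hα : 0 < α) : 0 < Cexit d α := by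
  have hd' : (2 : ℝ) ≤ d := by exact_mod_cast hd
  have h1 : 0 < Real.Gamma (((d : ℝ) - 1) / 2) := Real.Gamma_pos_of_pos (by linarith)
  have h2 : 0 < Real.Gamma (((d : ℝ) - 1 + α) / 2) := Real.Gamma_pos_of_pos (by linarith)
  have h3 : 0 < Real.Gamma (1 + α / 2) := Real.Gamma_pos_of_pos (by linarith)
  unfold Cexit
  positivity

lemma measurable_sStar {α ε : ℝ} : Measurable (sStar d α ε) := by
  classical
  have hy : Measurable (ystar d) := by
    have := measurable_inversion (d := d)
    unfold ystar
    fun_prop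
  have ht : Measurable fun y => tnorm d (ystar d y) := measurable_tnorm.comp hy
  unfold sStar
  refine Measurable.ite measurableSet_Lspindle ?_ measurable_const
  fun_prop

lemma measurable_sExit {α ε : ℝ} : Measurable (sExit d α ε) := by
  have ht := measurable_tnorm (d := d)
  unfold sExit
  fun_prop

lemma mul_max_rpow_mem_Icc {c α ε q : ℝ} (hc : 0 ≤ c) (hα : 0 < α) (hε : 0 < ε) (hq : 0 ≤ q) :
    c * (max (ε ^ 2 - q) 0) ^ (α / 2) ∈ Icc 0 (c * ε ^ α) := by
  refine ⟨by positivity, mul_le_mul_of_nonneg_left ?_ hc⟩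
  calc
    (max (ε ^ 2 - q) 0) ^ (α / 2) ≤ (ε ^ 2) ^ (α / 2) :=
      Real.rpow_le_rpow (le_max_right _ _) (max_le (by linarith) (by positivity)) (by positivity)
    _ = ε ^ α := by
      rw [← Real.rpow_natCast, ← Real.rpow_mul hε.le]
      push_cast
      ring_nf

lemma abs_sStar_sub_sExit_le (hd : 2 ≤ d) {α ε : ℝ} (hα : 0 < α) (hε : 0 < ε) (y : Ed d) :
    |sStar d α ε y - sExit d α ε y| ≤ Cexit d α * ε ^ α := by
  have hC := (Cexit_pos hd hα).le
  have h1 := mul_max_rpow_mem_Icc hC hα hε (sq_nonneg (tnorm d y))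
  have h2 : sStar d α ε y ∈ Icc 0 (Cexit d α * ε ^ α) := by
    unfold sStar
    split_ifs
    · exact mul_max_rpow_mem_Icc hC hα hε (sq_nonneg _)
    · exact ⟨le_rfl, by positivity⟩
  exact abs_sub_le_of_nonneg_of_le h2.1 h2.2 h1.1 h1.2

lemma sStar_eq_of_near (hd : 2 ≤ d) {α ε : ℝ} (hα : 0 < α) {y : Ed d}
    (ht : |lastCoord d y - 1| ≤ 1 / 4) (hρ : tnorm d y ≤ 1 / 2) :
    sStar d α ε y = Cexit d α * (max (ε ^ 2 - tnorm d (ystar d y) ^ 2) 0) ^ (α / 2) := by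
  obtain ⟨-, -, hmem⟩ := tnorm_ystar_sq_bounds hd ht hρ
  unfold sStar
  split_ifs with h
  · rfl
  · rw [hmem, not_lt] at h
    rw [max_eq_right (by linarith), Real.zero_rpow (by positivity), mul_zero]

lemma sStar_sub_sExit_eq_zero (hd : 2 ≤ d) {α ε : ℝ} (hα : 0 < α) (hε : 0 < ε) {y : Ed d}
    (ht : |lastCoord d y - 1| ≤ 1 / 4) (hρ : tnorm d y ≤ 1 / 2) (hout : ε ≤ tnorm d y) :
    sStar d α ε y - sExit d α ε y = 0 := by
  obtain ⟨h1, -, -⟩ := tnorm_ystar_sq_bounds hd ht hρ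
  have h2 : ε ^ 2 ≤ tnorm d y ^ 2 := by gcongr
  rw [sStar_eq_of_near hd hα ht hρ, sExit, max_eq_right (by linarith), max_eq_right (by linarith),
    sub_self]

lemma abs_sStar_sub_sExit_le_of_near (hd : 2 ≤ d) {α ε η : ℝ} (hα : 0 < α) (hη : 0 < η)
    (hαη : α / 2 + η ≤ 1) (hε : 0 < ε) (hε1 : ε ≤ 1) {y : Ed d}
    (ht : |lastCoord d y - 1| ≤ 1 / 4) (hρ : tnorm d y ≤ 1 / 2) (hin : tnorm d y < ε) :
    |sStar d α ε y - sExit d α ε y| ≤ 3 * Cexit d α * ε ^ α *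
      ((ε ^ 2 - tnorm d y ^ 2) ^ (-η) * |lastCoord d y - 1| ^ (α + 2 * η)) := by
  obtain ⟨h1, h2, -⟩ := tnorm_ystar_sq_bounds hd ht hρ
  have hC := Cexit_pos hd hα
  set ρ := tnorm d y with hρdef
  set q := tnorm d (ystar d y) ^ 2
  set t := lastCoord d y - 1
  have hρ0 : 0 ≤ ρ := tnorm_nonneg y
  have ha : 0 < ε ^ 2 - ρ ^ 2 := by nlinarith
  set b := max (ε ^ 2 - q) 0 with hb
  have hba : b ≤ ε ^ 2 - ρ ^ 2 := max_le (by linarith) ha.le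
  have hdiff : ε ^ 2 - ρ ^ 2 - b ≤ 3 * (ε * |t|) ^ 2 := by
    have h3 : ε ^ 2 - q ≤ b := le_max_left _ _
    have h4 : ρ ^ 2 ≤ ε ^ 2 := by linarith
    rw [mul_pow, sq_abs]
    nlinarith [sq_nonneg t]
  have hle : b ^ (α / 2) ≤ (ε ^ 2 - ρ ^ 2) ^ (α / 2) :=
    Real.rpow_le_rpow (le_max_right _ _) hba (by positivity)
  rw [sStar_eq_of_near hd hα ht hρ, sExit, ← hρdef, max_eq_left ha.le, abs_sub_comm, ← mul_sub,
    abs_mul, abs_of_pos hC, abs_of_nonneg (sub_nonneg.2 hle)]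
  have hpow : (3 * (ε * |t|) ^ 2) ^ (α / 2 + η) ≤ 3 * (ε ^ α * |t| ^ (α + 2 * η)) := by
    have e1 : ((ε * |t|) ^ 2) ^ (α / 2 + η) = ε ^ (α + 2 * η) * |t| ^ (α + 2 * η) := by
      rw [← Real.rpow_natCast, ← Real.rpow_mul (by positivity),
        ← Real.mul_rpow hε.le (abs_nonneg t)]
      push_cast
      ring_nf
    have e2 : (3 : ℝ) ^ (α / 2 + η) ≤ 3 := by
      simpa using Real.rpow_le_rpow_of_exponent_le (x := 3) (by norm_num) hαη
    have e3 : ε ^ (α + 2 * η) ≤ ε ^ α :=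
      Real.rpow_le_rpow_of_exponent_ge hε hε1 (by linarith)
    rw [Real.mul_rpow (by norm_num) (by positivity), e1]
    gcongr
  calc
    Cexit d α * ((ε ^ 2 - ρ ^ 2) ^ (α / 2) - b ^ (α / 2))
        ≤ Cexit d α * ((ε ^ 2 - ρ ^ 2) ^ (α / 2 - (α / 2 + η)) *
            (ε ^ 2 - ρ ^ 2 - b) ^ (α / 2 + η)) := by
      gcongr
      exact rpow_sub_rpow_le_mul_sub_rpow ha (le_max_right _ _) hba (by linarith) hαη
    _ ≤ Cexit d α * ((ε ^ 2 - ρ ^ 2) ^ (-η) * (3 * (ε ^ α * |t| ^ (α + 2 * η)))) := by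
      rw [show α / 2 - (α / 2 + η) = -η by ring]
      gcongr
      exact (Real.rpow_le_rpow (sub_nonneg.2 hba) hdiff (by positivity)).trans hpow
    _ = _ := by ring

lemma sStar_sub_sExit_eq_zero_of_mem_hyperF (hd : 2 ≤ d) {α ε : ℝ} (hα : 0 < α) {x : Ed d}
    (hρ : tnorm d x ≤ 1 / 2) (hx : x ∈ hyperF d) :
    sStar d α ε x - sExit d α ε x = 0 := by
  have hx' : lastCoord d x = 1 := hx
  have ht : |lastCoord d x - 1| ≤ 1 / 4 := by
    rw [hx']
    norm_num
  obtain ⟨h1, h2, -⟩ := tnorm_ystar_sq_bounds hd ht hρ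
  rw [hx'] at h2
  have : tnorm d (ystar d x) ^ 2 = tnorm d x ^ 2 := by linarith
  rw [sStar_eq_of_near hd hα ht hρ, this, sExit, sub_self]

/-- The integrand of the fractional Laplacian is dominated by a weakly singular term in the
cylinder and a tail term. -/
lemma enorm_integrand_le (hd : 2 ≤ d) {α ε η : ℝ} (hα : 0 < α) (hη : 0 < η)
    (hαη : α / 2 + η ≤ 1) (hε : 0 < ε) (hε1 : ε < 1 / 20) {x : Ed d} (hx : x ∈ cylPi d ε)
    (hxF : x ∈ hyperF d) (y : Ed d) :
    ‖rieszH d α y * (sStar d α ε y - sExit d α ε y) * ‖y - x‖ ^ (-(d : ℝ) - α)‖ₑ ≤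
      ENNReal.ofReal (3 * Cexit d α * 2 ^ ((d : ℝ) - α) * ε ^ α) *
        (cylPi d ε).indicator (fun y => ENNReal.ofReal
          ((ε ^ 2 - tnorm d y ^ 2) ^ (-η) * ‖y - x‖ ^ (2 * η - d))) y +
      ENNReal.ofReal (Cexit d α * ε ^ α) *
        {y : Ed d | 1 / 4 ≤ ‖y - x‖}.indicator (fun y => ENNReal.ofReal
          (rieszH d α y * ‖y - x‖ ^ (-(d : ℝ) - α))) y := by
  have hd' : (2 : ℝ) ≤ d := by exact_mod_cast hd
  have hC := Cexit_pos hd hα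
  have hx' : tnorm d x < ε := hx
  have hxF' : lastCoord d x = 1 := hxF
  have hh : 0 ≤ rieszH d α y := Real.rpow_nonneg (norm_nonneg _) _
  rw [← ofReal_norm, norm_mul, norm_mul, Real.norm_eq_abs, Real.norm_eq_abs, Real.norm_eq_abs,
    abs_of_nonneg hh, abs_of_nonneg (by positivity : 0 ≤ ‖y - x‖ ^ (-(d : ℝ) - α))]
  rcases le_or_gt (1 / 4) ‖y - x‖ with hfar | hnear
  · refine le_add_left ?_
    rw [indicator_of_mem (show y ∈ {y : Ed d | 1 / 4 ≤ ‖y - x‖} from hfar),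
      ← ENNReal.ofReal_mul (by positivity)]
    refine ENNReal.ofReal_le_ofReal ?_
    calc
      _ ≤ rieszH d α y * (Cexit d α * ε ^ α) * ‖y - x‖ ^ (-(d : ℝ) - α) := by
        gcongr
        exact abs_sStar_sub_sExit_le hd hα hε y
      _ = _ := by ring
  refine le_add_right ?_
  have htl : |lastCoord d y - 1| ≤ ‖y - x‖ := by
    rw [← hxF', ← lastCoord_sub]
    exact abs_lastCoord_le_norm hd _
  have ht : |lastCoord d y - 1| ≤ 1 / 4 := htl.trans hnear.le
  have hρ : tnorm d y ≤ 1 / 2 :=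
    (tnorm_le_tnorm_add_norm_sub hd x y).trans (by linarith)
  rcases lt_or_ge (tnorm d y) ε with hin | hout
  · rcases eq_or_ne y x with rfl | hyx
    · simp [sStar_sub_sExit_eq_zero_of_mem_hyperF hd hα hρ hxF]
    have hpos : 0 < ‖y - x‖ := norm_pos_iff.2 (sub_ne_zero.2 hyx)
    rw [indicator_of_mem (show y ∈ cylPi d ε from hin), ← ENNReal.ofReal_mul (by positivity)]
    refine ENNReal.ofReal_le_ofReal ?_
    have hy : 1 / 2 ≤ ‖y‖ := by
      have := (le_abs_self _).trans (abs_lastCoord_le_norm hd y)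
      linarith [(abs_le.1 ht).1]
    have hriesz : rieszH d α y ≤ 2 ^ ((d : ℝ) - α) := by
      calc
        rieszH d α y ≤ (1 / 2) ^ (α - (d : ℝ)) :=
          Real.rpow_le_rpow_of_nonpos (by norm_num) hy (by linarith)
        _ = _ := by
          rw [one_div, Real.inv_rpow (by norm_num), ← Real.rpow_neg (by norm_num), neg_sub]
    have ha : 0 ≤ ε ^ 2 - tnorm d y ^ 2 := by nlinarith [tnorm_nonneg y]
    calc
      _ ≤ 2 ^ ((d : ℝ) - α) * (3 * Cexit d α * ε ^ α *
          ((ε ^ 2 - tnorm d y ^ 2) ^ (-η) * ‖y - x‖ ^ (α + 2 * η))) *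
            ‖y - x‖ ^ (-(d : ℝ) - α) := by
        gcongr
        refine (abs_sStar_sub_sExit_le_of_near hd hα hη hαη hε (by linarith) ht hρ hin).trans ?_
        gcongr
      _ = 3 * Cexit d α * 2 ^ ((d : ℝ) - α) * ε ^ α * ((ε ^ 2 - tnorm d y ^ 2) ^ (-η) *
          (‖y - x‖ ^ (α + 2 * η) * ‖y - x‖ ^ (-(d : ℝ) - α))) := by ring
      _ = _ := by
        rw [← Real.rpow_add hpos]
        ring_nf
  · simp [sStar_sub_sExit_eq_zero hd hα hε ht hρ hout]

end DifferenceOfExitTimes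


/-- `Δ^{α/2}(h (s*_ε - s_ε))(x) = O(ε^α)` for `x ∈ Π_ε ∩ F`. -/
theorem fracLap_h_sStar_sub_sExit (d : ℕ) (hd : 2 ≤ d) (α : ℝ) (hα : 0 < α) (hα2 : α < 2) :
    ∃ C : ℝ, 0 < C ∧ ∀ ε ∈ Set.Ioo (0 : ℝ) (1 / 20), ∀ x ∈ cylPi d ε ∩ hyperF d,
      ∃ L : ℝ, fracLapAt d α (fun y => rieszH d α y * (sStar d α ε y - sExit d α ε y)) x L ∧
        |L| ≤ C * ε ^ α := by
  set η : ℝ := (1 - α / 2) / 2 with hη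
  have hη0 : 0 < η := by linarith
  obtain ⟨K₁, hK₁, hcyl⟩ := exists_lintegral_cylinder_le hd hη0 (by linarith)
  obtain ⟨K₂, hK₂, hfar⟩ := exists_lintegral_far_le hd hα hα2
  have hC := Cexit_pos hd hα
  set c₁ := 3 * Cexit d α * 2 ^ ((d : ℝ) - α) with hc₁
  refine ⟨|fracConst d α| * (c₁ * K₁.toReal + Cexit d α * K₂.toReal) + 1, by positivity, ?_⟩
  rintro ε ⟨hε, hε1⟩ x ⟨hx, hxF⟩
  have hx' : tnorm d x < ε := hx
  have hΦx : sStar d α ε x - sExit d α ε x = 0 :=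
    sStar_sub_sExit_eq_zero_of_mem_hyperF hd hα (by linarith) hxF
  set Φ : Ed d → ℝ := fun y => rieszH d α y * (sStar d α ε y - sExit d α ε y) with hΦ
  set F : Ed d → ℝ := fun y => (Φ y - Φ x) * ‖y - x‖ ^ (-(d : ℝ) - α) with hF
  have hFm : Measurable F := by
    have h1 := measurable_sStar (d := d) (α := α) (ε := ε)
    have h2 := measurable_sExit (d := d) (α := α) (ε := ε)
    simp only [hF, hΦ, rieszH]
    fun_prop
  have hcylm : MeasurableSet (cylPi d ε) := measurableSet_lt measurable_tnorm measurable_const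
  have hfarm : MeasurableSet {y : Ed d | 1 / 4 ≤ ‖y - x‖} :=
    measurableSet_le measurable_const (by fun_prop)
  have hbound : ∫⁻ y, ‖F y‖ₑ ≤
      ENNReal.ofReal ((c₁ * K₁.toReal + Cexit d α * K₂.toReal) * ε ^ α) := by
    calc
      ∫⁻ y, ‖F y‖ₑ ≤ ∫⁻ y, (ENNReal.ofReal (c₁ * ε ^ α) *
            (cylPi d ε).indicator (fun y => ENNReal.ofReal
              ((ε ^ 2 - tnorm d y ^ 2) ^ (-η) * ‖y - x‖ ^ (2 * η - d))) y +
          ENNReal.ofReal (Cexit d α * ε ^ α) *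
            {y : Ed d | 1 / 4 ≤ ‖y - x‖}.indicator (fun y => ENNReal.ofReal
              (rieszH d α y * ‖y - x‖ ^ (-(d : ℝ) - α))) y) := by
        refine lintegral_mono fun y => ?_
        have h := enorm_integrand_le hd hα hη0 (by linarith) hε hε1 hx hxF y
        simpa only [hF, hΦ, hΦx, mul_zero, sub_zero] using h
      _ ≤ ENNReal.ofReal (c₁ * ε ^ α) * K₁ + ENNReal.ofReal (Cexit d α * ε ^ α) * K₂ := by
        have ht := measurable_tnorm (d := d)
        rw [lintegral_add_left ((Measurable.indicator (by fun_prop) hcylm).const_mul _),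
          lintegral_const_mul' _ _ ENNReal.ofReal_ne_top,
          lintegral_const_mul' _ _ ENNReal.ofReal_ne_top, lintegral_indicator hcylm,
          lintegral_indicator hfarm]
        gcongr
        · exact hcyl ε x hx'
        · exact hfar x
      _ = _ := by
        rw [← ENNReal.ofReal_toReal hK₁, ← ENNReal.ofReal_toReal hK₂,
          ← ENNReal.ofReal_mul (by positivity), ← ENNReal.ofReal_mul (by positivity),
          ← ENNReal.ofReal_add (by positivity) (by positivity),
          ENNReal.toReal_ofReal ENNReal.toReal_nonneg, ENNReal.toReal_ofReal ENNReal.toReal_nonneg]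
        ring_nf
  have hint : Integrable F :=
    ⟨hFm.aestronglyMeasurable, hbound.trans_lt ENNReal.ofReal_lt_top⟩
  refine ⟨_, fracLapAt_of_integrable hint, ?_⟩
  have hnorm : |∫ y, F y| ≤ (c₁ * K₁.toReal + Cexit d α * K₂.toReal) * ε ^ α := by
    rw [← Real.norm_eq_abs]
    refine (ENNReal.ofReal_le_ofReal_iff (by positivity)).1 ?_
    rw [ofReal_norm]
    exact (enorm_integral_le_lintegral_enorm F).trans hbound
  rw [abs_mul]
  have hεα : 0 < ε ^ α := by positivity
  nlinarith [mul_le_mul_of_nonneg_left hnorm (abs_nonneg (fracConst d α))]
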